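/- Let m ≥ 2 and 0 ≤ a ≤ m−2 be integers and q a complex number with 0 < |q| < 1. Then (q^{a+1}; q^{2m+1})_∞ · (q^{2m−a}; q^{2m+1})_∞ · (q^{2m+1}; q^{2m+1})_∞ / (q;q)_∞ = Σ_{k₁,…,k_{m−1} ≥ 0} (q^{k₁²+⋯+k_{m−1}² + k_{a+1}+⋯+k_{m−1}} / (q;q)_{k_{m−1}}) · (∏_{i=1, i≠a}^{m−2} [k_{i+1} choose k_i]_q) · [k_{a+1}+1 choose k_a]_q, with the convention k₀ = 0 when a = 0; the series converges absolutely. -/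

import Mathlib

/-- The finite q-Pochhammer symbol `(x;q)_n = ∏_{i=1}^n (1 - x q^{i-1})`. -/
noncomputable def qPoch (q x : ℂ) (n : ℕ) : ℂ := ∏ i ∈ Finset.range n, (1 - x * q ^ i)

/-- The infinite q-Pochhammer symbol `(x;q)_∞ = ∏_{i=1}^∞ (1 - x q^{i-1})`. -/
noncomputable def qPochInf (q x : ℂ) : ℂ := ∏' i : ℕ, (1 - x * q ^ i)

/-- The Gaussian binomial coefficient `[n choose c]_q`. -/
noncomputable def qBinom (q : ℂ) (n c : ℕ) : ℂ :=
  if c ≤ n then qPoch q q n / (qPoch q q c * qPoch q q (n - c)) else 0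

/-- Extends a tuple `(k₁,…,k_m)` to all of `ℕ` by `0` (in particular `k₀ = 0`). -/
def Kfun (m : ℕ) (k : Fin m → ℕ) (i : ℕ) : ℕ :=
  if h : 1 ≤ i ∧ i ≤ m then k ⟨i - 1, by omega⟩ else 0

/-- The Andrews–Gordon-type summand
`q^{k₁²+⋯+k_{m-1}²+k_{a+1}+⋯+k_{m-1}} / (q;q)_{k_{m-1}}
 · (∏_{i=1,i≠a}^{m-2} [k_{i+1},k_i]) · [k_{a+1}+1,k_a]`, with `k₀ = 0`. -/
noncomputable def AGterm (q : ℂ) (m a : ℕ) (k : Fin (m - 1) → ℕ) : ℂ :=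
  q ^ (∑ i ∈ Finset.Ico 1 m, (Kfun (m - 1) k i) ^ 2 + ∑ i ∈ Finset.Ico (a + 1) m, Kfun (m - 1) k i)
    / qPoch q q (Kfun (m - 1) k (m - 1)) *
  (∏ i ∈ (Finset.Ico 1 (m - 1)).erase a,
    qBinom q (Kfun (m - 1) k (i + 1)) (Kfun (m - 1) k i)) *
  qBinom q (Kfun (m - 1) k (a + 1) + 1) (Kfun (m - 1) k a)


namespace AG

lemma P_succ (q : ℂ) (n : ℕ) : qPoch q q (n+1) = qPoch q q n * (1 - q^(n+1)) := by
  simp [qPoch, Finset.prod_range_succ, pow_succ']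

lemma P_zero (q : ℂ) : qPoch q q 0 = 1 := by simp [qPoch]

lemma one_sub_ne {q : ℂ} (hq : ‖q‖ < 1) (n : ℕ) : 1 - q^(n+1) ≠ 0 := by
  intro h
  have h1 : q^(n+1) = 1 := (sub_eq_zero.mp h).symm
  have h2 : ‖q‖^(n+1) < 1 := pow_lt_one₀ (norm_nonneg _) hq (by omega)
  rw [← norm_pow, h1] at h2
  simp at h2

lemma P_ne {q : ℂ} (hq : ‖q‖ < 1) (n : ℕ) : qPoch q q n ≠ 0 := by
  induction n with
  | zero => simp [P_zero]
  | succ n ih => rw [P_succ]; exact mul_ne_zero ih (one_sub_ne hq n)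

lemma binom_add (q : ℂ) (k d : ℕ) :
    qBinom q (k+d) k = qPoch q q (k+d) / (qPoch q q k * qPoch q q d) := by
  simp [qBinom]

lemma binom_lt (q : ℂ) {n k : ℕ} (h : n < k) : qBinom q n k = 0 := by
  simp [qBinom, h]

lemma binom_zero {q : ℂ} (hq : ‖q‖ < 1) (n : ℕ) : qBinom q n 0 = 1 := by
  have := P_ne hq n
  simp [qBinom, P_zero, this]

lemma binom_self {q : ℂ} (hq : ‖q‖ < 1) (n : ℕ) : qBinom q n n = 1 := by
  have := P_ne hq n
  simp [qBinom, P_zero, this]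

lemma pascal1 {q : ℂ} (hq : ‖q‖ < 1) (n k : ℕ) :
    qBinom q (n+1) (k+1) = qBinom q n k + q^(k+1) * qBinom q n (k+1) := by
  rcases lt_trichotomy n k with h | h | h
  · rw [binom_lt q h, binom_lt q (by omega), binom_lt q (by omega)]; simp
  · subst h
    rw [binom_self hq, binom_self hq, binom_lt q (by omega)]; simp
  · obtain ⟨d, rfl⟩ := Nat.exists_eq_add_of_lt h
    have e1 : k + d + 1 + 1 = (k+1) + (d+1) := by ring
    have e2 : qBinom q (k+d+1) k = qBinom q (k + (d+1)) k := by congr 1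
    have e3 : qBinom q (k+d+1) (k+1) = qBinom q ((k+1) + d) (k+1) := by congr 1; ring
    rw [e2, e3, e1, binom_add, binom_add, binom_add]
    have e4 : k + 1 + (d+1) = (k+d+1)+1 := by ring
    have e5 : k + (d+1) = k+d+1 := by ring
    have e6 : k + 1 + d = k+d+1 := by ring
    rw [e4, e5, e6, P_succ q (k+d+1), P_succ q k, P_succ q d]
    have h1 := P_ne hq k
    have h2 := P_ne hq d
    have h3 := one_sub_ne hq k
    have h4 := one_sub_ne hq d
    field_simp
    ring

lemma pascal2 {q : ℂ} (hq : ‖q‖ < 1) (n k : ℕ) (hk : k ≤ n) :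
    qBinom q (n+1) (k+1) = qBinom q n (k+1) + q^(n-k) * qBinom q n k := by
  rcases hk.eq_or_lt with h | h
  · subst h
    rw [binom_self hq, binom_self hq, binom_lt q (by omega)]; simp
  · obtain ⟨d, rfl⟩ := Nat.exists_eq_add_of_lt h
    have e1 : k + d + 1 + 1 = (k+1) + (d+1) := by ring
    have e2 : qBinom q (k+d+1) k = qBinom q (k + (d+1)) k := by congr 1
    have e3 : qBinom q (k+d+1) (k+1) = qBinom q ((k+1) + d) (k+1) := by congr 1; ring
    have e0 : k + d + 1 - k = d + 1 := by omega
    rw [e2, e3, e1, e0, binom_add, binom_add, binom_add]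
    have e4 : k + 1 + (d+1) = (k+d+1)+1 := by ring
    have e5 : k + (d+1) = k+d+1 := by ring
    have e6 : k + 1 + d = k+d+1 := by ring
    rw [e4, e5, e6, P_succ q (k+d+1), P_succ q k, P_succ q d]
    have h1 := P_ne hq k
    have h2 := P_ne hq d
    have h3 := one_sub_ne hq k
    have h4 := one_sub_ne hq d
    field_simp
    ring

lemma vander {q : ℂ} (hq : ‖q‖ < 1) (M : ℕ) : ∀ (s : ℕ),
    ∑ j ∈ Finset.range (M+1), q^(j*(j+s)) * qBinom q M j / qPoch q q (j+s)
      = 1 / qPoch q q (M+s) := by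
  induction M with
  | zero => intro s; simp [binom_zero hq]
  | succ M ih =>
    intro s
    have e2 : M + 1 + s = (M + s) + 1 := by ring
    have h5 : 1 / qPoch q q (M+1+s) = 1 / qPoch q q (M+s) + q^(M+s+1) * (1 / qPoch q q (M+(s+1))) := by
      rw [← add_assoc, e2, P_succ]
      have h1 := P_ne hq (M+s)
      have h2 := one_sub_ne hq (M+s)
      field_simp
      ring
    rw [h5, ← ih s, ← ih (s+1), Finset.sum_range_succ']
    have h4 : ∑ j ∈ Finset.range (M+1), q^(j*(j+s)) * qBinom q M j / qPoch q q (j+s)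
        = ∑ j ∈ Finset.range (M+2), q^(j*(j+s)) * qBinom q M j / qPoch q q (j+s) := by
      rw [Finset.sum_range_succ _ (M+1), binom_lt q (Nat.lt_succ_self M)]; simp
    rw [h4, Finset.sum_range_succ' _ (M+1), Finset.mul_sum, add_right_comm, ← Finset.sum_add_distrib]
    congr 1
    · apply Finset.sum_congr rfl
      intro j hj
      have hj' : j ≤ M := by simpa [Nat.lt_succ_iff] using hj
      rw [pascal2 hq M j hj']
      have e3 : j + (s+1) = j + 1 + s := by ring
      rw [e3]
      have e4 : q^((j+1)*(j+1+s)) * q^(M-j) = q^(M+s+1) * q^(j*(j+1+s)) := by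
        rw [← pow_add, ← pow_add]
        congr 1
        obtain ⟨d, rfl⟩ := Nat.exists_eq_add_of_le hj'
        simp only [Nat.add_sub_cancel_left]
        ring
      linear_combination (qBinom q M j / qPoch q q (j+1+s)) * e4
    · simp [binom_zero hq]

/-- reciprocal form of the Vandermonde sum -/
lemma vander' {q : ℂ} (hq : ‖q‖ < 1) (M s : ℕ) :
    ∑ j ∈ Finset.range (M+1),
      q^(j*(j+s)) / (qPoch q q (M-j) * qPoch q q j * qPoch q q (j+s))
      = 1 / (qPoch q q M * qPoch q q (M+s)) := by
  have h := vander hq M s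
  have h1 := P_ne hq M
  rw [mul_comm (qPoch q q M), ← div_div, ← h, Finset.sum_div]
  apply Finset.sum_congr rfl
  intro j hj
  have hj' : j ≤ M := by simpa [Nat.lt_succ_iff] using hj
  obtain ⟨d, rfl⟩ := Nat.exists_eq_add_of_le hj'
  rw [binom_add, Nat.add_sub_cancel_left]
  have h2 := P_ne hq j
  have h3 := P_ne hq d
  have h4 := P_ne hq (j+s)
  field_simp

/-- Bailey's lemma, for Bailey pairs relative to `q ^ e`. -/
lemma bailey {q : ℂ} (hq : ‖q‖ < 1) (e : ℕ) (α : ℕ → ℂ) (n : ℕ) :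
    ∑ x ∈ Finset.range (n+1), q^(x^2+e*x) / qPoch q q (n-x) *
      ∑ r ∈ Finset.range (x+1), α r / (qPoch q q (x-r) * qPoch q q (x+r+e))
    = ∑ r ∈ Finset.range (n+1), α r * q^(r^2+e*r) / (qPoch q q (n-r) * qPoch q q (n+r+e)) := by
  simp_rw [Finset.mul_sum]
  rw [Finset.sum_comm' (t' := Finset.range (n+1)) (s' := fun r => Finset.Ico r (n+1))
    (by intro x y; simp only [Finset.mem_range, Finset.mem_Ico]; omega)]
  apply Finset.sum_congr rfl
  intro r hr
  have hr' : r ≤ n := by simpa [Nat.lt_succ_iff] using hr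
  obtain ⟨M, rfl⟩ := Nat.exists_eq_add_of_le hr'
  have h := vander' hq M (2*r+e)
  rw [Finset.sum_Ico_eq_sum_range]
  have e1 : r + M + 1 - r = M + 1 := by omega
  have e2 : r + M + r + e = M + (2*r+e) := by ring
  rw [e1, e2, Nat.add_sub_cancel_left, div_eq_mul_one_div, ← h, Finset.mul_sum]
  apply Finset.sum_congr rfl
  intro j hj
  have e3 : r + M - (r + j) = M - j := by omega
  have e4 : r + j + r + e = j + (2*r+e) := by ring
  have e5 : (r+j)^2 + e*(r+j) = (r^2+e*r) + j*(j+(2*r+e)) := by ring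
  rw [e3, e4, e5, Nat.add_sub_cancel_left, pow_add]
  have h1 := P_ne hq (M-j)
  have h2 := P_ne hq j
  have h3 := P_ne hq (j+(2*r+e))
  field_simp

end AG

namespace AG

/-- triangular numbers -/
def tri (r : ℕ) : ℕ := (r+1).choose 2

lemma tri_zero : tri 0 = 0 := rfl

lemma tri_succ (r : ℕ) : tri (r+1) = tri r + (r+1) := by
  simp [tri, Nat.choose_succ_succ' (r+1) 1]; ring

/-- the unit Bailey pair -/
noncomputable def A (q : ℂ) : ℕ → ℂ
  | 0 => 1
  | (r+1) => (-1)^(r+1) * q^(tri r) * (1 + q^(r+1))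

noncomputable def bb (q : ℂ) (e : ℕ) (α : ℕ → ℂ) (n : ℕ) : ℂ :=
  ∑ r ∈ Finset.range (n+1), α r / (qPoch q q (n-r) * qPoch q q (n+r+e))

noncomputable def b (q : ℂ) (c n : ℕ) : ℂ := bb q 0 (fun r => A q r * q^(c*r^2)) n

noncomputable def alp (q : ℂ) (c d r : ℕ) : ℂ :=
  (-1)^r * q^(tri r + c*r^2) * (1 - q^(c*(2*r+1))) * q^(d*(r^2+r))

noncomputable def b' (q : ℂ) (c d n : ℕ) : ℂ := bb q 1 (alp q c d) n

lemma b_zero_zero (q : ℂ) : b q 0 0 = 1 := by simp [b, bb, A, P_zero]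

lemma unit_partial {q : ℂ} (hq : ‖q‖ < 1) (N R : ℕ) (hR : R ≤ N) :
    ∑ r ∈ Finset.range (R+1), A q r / (qPoch q q (N+1-r) * qPoch q q (N+1+r))
      = (-1)^R * q^(tri R) / ((1 - q^(N+1)) * qPoch q q (N-R) * qPoch q q (N+1+R)) := by
  induction R with
  | zero =>
    simp only [zero_add, Finset.sum_range_one, A, tri_zero, pow_zero, Nat.sub_zero, add_zero]
    rw [P_succ]
    have h1 := P_ne hq N
    have h2 := one_sub_ne hq N
    field_simp
  | succ R ih =>
    rw [Finset.sum_range_succ, ih (by omega)]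
    obtain ⟨d, rfl⟩ := Nat.exists_eq_add_of_le hR
    have e1 : R + 1 + d - R = d + 1 := by omega
    have e2 : R + 1 + d + 1 - (R+1) = d + 1 := by omega
    have e3 : R + 1 + d - (R + 1) = d := by omega
    have e4 : R + 1 + d + 1 + (R+1) = (2*R+d+2) + 1 := by ring
    have e5 : R + 1 + d + 1 + R = (2*R+d+2) := by ring
    rw [e1, e2, e3, e4, e5, P_succ q d, P_succ q (2*R+d+2), tri_succ]
    simp only [A]
    have h1 := P_ne hq d
    have h2 := one_sub_ne hq d
    have h3 := P_ne hq (2*R+d+2)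
    have h4 := one_sub_ne hq (2*R+d+2)
    have h5 := one_sub_ne hq (R+1+d)
    field_simp
    ring

lemma b_zero_succ {q : ℂ} (hq : ‖q‖ < 1) (N : ℕ) : b q 0 (N+1) = 0 := by
  unfold b bb
  simp only [zero_mul, pow_zero, mul_one, add_zero]
  rw [Finset.sum_range_succ, unit_partial hq N N le_rfl]
  have e4 : N + 1 + (N+1) = (2*N+1) + 1 := by ring
  have e5 : N + 1 + N = (2*N+1) := by ring
  rw [e4, e5, P_succ q (2*N+1), Nat.sub_self, Nat.sub_self, P_zero]
  simp only [A]
  have h3 := P_ne hq (2*N+1)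
  have h4 := one_sub_ne hq (2*N+1)
  have h5 := one_sub_ne hq N
  field_simp
  ring

lemma b_succ {q : ℂ} (hq : ‖q‖ < 1) (c n : ℕ) :
    b q (c+1) n = ∑ x ∈ Finset.range (n+1), q^(x^2) / qPoch q q (n-x) * b q c x := by
  have h := bailey hq 0 (fun r => A q r * q^(c*r^2)) n
  simp only [zero_mul, add_zero] at h
  simp only [b, bb, add_zero]
  rw [h]
  apply Finset.sum_congr rfl
  intro r _
  ring

lemma b_one {q : ℂ} (hq : ‖q‖ < 1) (n : ℕ) : b q 1 n = 1 / qPoch q q n := by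
  rw [b_succ hq 0 n, Finset.sum_range_succ', Finset.sum_eq_zero]
  · simp [b_zero_zero]
  · intro x _; rw [b_zero_succ hq]; simp

lemma b'_succ {q : ℂ} (hq : ‖q‖ < 1) (c d n : ℕ) :
    b' q c (d+1) n = ∑ x ∈ Finset.range (n+1), q^(x^2+x) / qPoch q q (n-x) * b' q c d x := by
  have h := bailey hq 1 (alp q c d) n
  simp only [one_mul] at h
  simp only [b', bb]
  rw [h]
  apply Finset.sum_congr rfl
  intro r _
  unfold alp
  ring

lemma b'_zero {q : ℂ} (hq : ‖q‖ < 1) (c n : ℕ) :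
    b' q c 0 n = (1 - q^(n+1)) * b q c (n+1) := by
  let X : ℕ → ℂ := fun r => (-1)^r * q^(tri r + c*r^2) * (1 - q^(n+1-r)) /
    (qPoch q q (n+1-r) * qPoch q q (n+1+r))
  have hX : ∑ r ∈ Finset.range (n+1), X r = ∑ r ∈ Finset.range (n+1), X (r+1) + X 0 := by
    rw [← Finset.sum_range_succ', Finset.sum_range_succ _ (n+1)]
    simp [X]
  have h1 : b' q c 0 n = ∑ r ∈ Finset.range (n+1), X r -
      ∑ r ∈ Finset.range (n+1), (-1)^r * q^(tri r + c*(r+1)^2) /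
        (qPoch q q (n-r) * qPoch q q (n+1+r)) := by
    rw [← Finset.sum_sub_distrib]
    unfold b' bb
    apply Finset.sum_congr rfl
    intro r hr
    have hr' : r ≤ n := by simpa [Nat.lt_succ_iff] using hr
    obtain ⟨d, rfl⟩ := Nat.exists_eq_add_of_le hr'
    simp only [X, alp]
    have e1 : r + d + 1 - r = d + 1 := by omega
    have e2 : r + d - r = d := by omega
    have e3 : r + d + r + 1 = r + d + 1 + r := by ring
    rw [e1, e2, e3, P_succ q d]
    have h1 := P_ne hq d
    have h2 := one_sub_ne hq d
    have h3 := P_ne hq (r+d+1+r)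
    field_simp
    ring
  rw [h1, hX]
  unfold b bb
  rw [Finset.sum_range_succ' _ (n+1), mul_add, Finset.mul_sum, add_sub_right_comm,
    ← Finset.sum_sub_distrib]
  congr 1
  · apply Finset.sum_congr rfl
    intro r hr
    have hr' : r ≤ n := by simpa [Nat.lt_succ_iff] using hr
    obtain ⟨d, rfl⟩ := Nat.exists_eq_add_of_le hr'
    simp only [X, A]
    have e1 : r + d + 1 - (r+1) = d := by omega
    have e2 : r + d - r = d := by omega
    have e3 : r + d + 1 + (r + 1) = (2*r+d+1)+1 := by ring
    have e4 : r + d + 1 + r = 2*r+d+1 := by ring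
    rw [e1, e2, e4, e3, add_zero, P_succ q (2*r+d+1), tri_succ]
    have h1 := P_ne hq d
    have h3 := P_ne hq (2*r+d+1)
    have h4 := one_sub_ne hq (2*r+d+1)
    field_simp
    ring
  · simp [X, A, tri_zero]
    ring

end AG

namespace AG

noncomputable def sg (Q x y : ℂ) : ℤ → ℂ
  | Int.ofNat r => (-1)^r * Q^(r.choose 2) * x^r
  | Int.negSucc r => (-1)^(r+1) * Q^(tri r) * y^(r+1)

lemma sg_succ {Q x y : ℂ} (hQ : Q ≠ 0) (h : x * y = Q) (r : ℤ) :
    sg Q x y (r+1) = - sg Q x y r * x * Q^r := by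
  rcases r with r | r
  · change sg Q x y (Int.ofNat (r+1)) = _
    simp only [sg, Nat.choose_succ_succ' r 1, Nat.choose_one_right, Int.ofNat_eq_natCast, zpow_natCast]
    norm_num
    ring
  · rcases r with _ | r
    · change sg Q x y (Int.ofNat 0) = _
      simp only [sg, Int.negSucc_eq, tri_zero]
      norm_num
      field_simp
      rw [mul_comm, h]
    · have : Int.negSucc (r+1) + 1 = Int.negSucc r := by rw [Int.negSucc_eq, Int.negSucc_eq]; push_cast; ring
      rw [this]
      simp only [sg, tri_succ, zpow_negSucc]
      field_simp
      have : x * y^(r+1+1) = Q * y^(r+1) := by rw [← h]; ring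
      rw [pow_add Q (tri r)]
      linear_combination ((-1)^(r+1) * Q^(r+1) * Q^(tri r) : ℂ) * (-this)

lemma jtp_fin_zero {Q x y : ℂ} (hq : ‖Q‖ < 1) (hQ : Q ≠ 0) (h : x * y = Q) (M N : ℕ)
    (ih : qPoch Q y M * qPoch Q x N
      = ∑ j ∈ Finset.range (M+N+1), qBinom Q (M+N) j * sg Q x y ((j:ℤ) - M)) :
    qPoch Q y M * qPoch Q x (N+1)
      = ∑ j ∈ Finset.range (M+(N+1)+1), qBinom Q (M+(N+1)) j * sg Q x y ((j:ℤ) - M) := by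
  have e0 : qPoch Q x (N+1) = qPoch Q x N * (1 - x * Q^N) := by
    simp [qPoch, Finset.prod_range_succ]
  rw [e0, ← mul_assoc, ih, mul_sub, mul_one]
  have h4 : ∑ j ∈ Finset.range (M+N+1), qBinom Q (M+N) j * sg Q x y ((j:ℤ) - M)
      = ∑ j ∈ Finset.range (M+N+1), qBinom Q (M+N) (j+1) * sg Q x y (((j+1:ℕ):ℤ) - M)
        + qBinom Q (M+(N+1)) 0 * sg Q x y (((0:ℕ):ℤ) - M) := by
    rw [binom_zero hq, ← binom_zero hq (M+N),
      ← Finset.sum_range_succ' (fun j => qBinom Q (M+N) j * sg Q x y ((j:ℤ) - M)),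
      Finset.sum_range_succ _ (M+N+1), binom_lt Q (Nat.lt_succ_self _), zero_mul, add_zero]
  nth_rewrite 1 [h4]
  rw [← add_assoc M N 1, Finset.sum_range_succ' _ (M+N+1), add_sub_right_comm, Finset.sum_mul,
    ← Finset.sum_sub_distrib]
  congr 1
  apply Finset.sum_congr rfl
  intro j hj
  have hj' : j ≤ M+N := by simpa [Nat.lt_succ_iff] using hj
  rw [pascal2 hq (M+N) j hj']
  have e1 : (((j+1:ℕ):ℤ) - M) = ((j:ℤ)-M) + 1 := by push_cast; ring
  have e2 : Q^((j:ℤ)-M) * Q^(M+N-j) = Q^N := by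
    rw [← zpow_natCast, ← zpow_natCast, ← zpow_add₀ hQ]
    congr 1
    push_cast [hj']
    ring
  rw [e1, sg_succ hQ h]
  linear_combination (- qBinom Q (M+N) j * sg Q x y ((j:ℤ)-M) * x) * -e2

lemma jtp_fin_M {Q x y : ℂ} (hq : ‖Q‖ < 1) (hQ : Q ≠ 0) (h : x * y = Q) (M N : ℕ)
    (ih : qPoch Q y M * qPoch Q x N
      = ∑ j ∈ Finset.range (M+N+1), qBinom Q (M+N) j * sg Q x y ((j:ℤ) - M)) :
    qPoch Q y (M+1) * qPoch Q x N
      = ∑ j ∈ Finset.range (M+1+N+1), qBinom Q (M+1+N) j * sg Q x y ((j:ℤ) - (M+1:ℕ)) := by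
  have e0 : qPoch Q y (M+1) = qPoch Q y M * (1 - y * Q^M) := by
    simp [qPoch, Finset.prod_range_succ]
  have hx : x ≠ 0 := by rintro rfl; simp at h; exact hQ h.symm
  have key : ∀ j : ℕ, Q^j * sg Q x y ((j:ℤ) - (M+1:ℕ)) = - sg Q x y ((j:ℤ) - M) * (y * Q^M) := by
    intro j
    have e1 : (j:ℤ) - M = ((j:ℤ) - (M+1:ℕ)) + 1 := by push_cast; ring
    have e2 : Q^((j:ℤ) - (M+1:ℕ)) * Q^(M+1) = Q^j := by
      rw [← zpow_natCast, ← zpow_natCast, ← zpow_add₀ hQ]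
      congr 1; ring
    rw [e1, sg_succ hQ h, ← e2, pow_succ]
    nth_rewrite 3 [← h]
    ring
  rw [e0, mul_right_comm, ih, mul_sub, mul_one]
  have h4 : (∑ j ∈ Finset.range (M+N+1), qBinom Q (M+N) j * sg Q x y ((j:ℤ) - M)) * (y * Q^M)
      = -(∑ j ∈ Finset.range (M+N+1),
          qBinom Q (M+N) (j+1) * Q^(j+1) * sg Q x y (((j+1:ℕ):ℤ) - (M+1:ℕ))
        + qBinom Q (M+1+N) 0 * sg Q x y (((0:ℕ):ℤ) - (M+1:ℕ))) := by
    have : qBinom Q (M+1+N) 0 * sg Q x y (((0:ℕ):ℤ) - (M+1:ℕ))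
      = qBinom Q (M+N) 0 * Q^0 * sg Q x y (((0:ℕ):ℤ) - (M+1:ℕ)) := by
      rw [binom_zero hq, binom_zero hq]; simp
    rw [this, ← Finset.sum_range_succ'
      (fun j => qBinom Q (M+N) j * Q^j * sg Q x y ((j:ℤ) - (M+1:ℕ))),
      Finset.sum_range_succ _ (M+N+1), binom_lt Q (Nat.lt_succ_self _), zero_mul, zero_mul, add_zero,
      Finset.sum_mul, ← Finset.sum_neg_distrib]
    apply Finset.sum_congr rfl
    intro j _
    linear_combination (qBinom Q (M+N) j) * key j
  have e5 : M + 1 + N = M + N + 1 := by ring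
  rw [h4, e5, Finset.sum_range_succ' _ (M+N+1), sub_neg_eq_add, ← add_assoc,
    ← Finset.sum_add_distrib]
  congr 1
  apply Finset.sum_congr rfl
  intro j hj
  rw [pascal1 hq (M+N) j]
  have e1 : (((j+1:ℕ):ℤ) - (M+1:ℕ)) = ((j:ℤ)-M) := by push_cast; ring
  rw [e1]
  ring

lemma jtp_fin {Q x y : ℂ} (hq : ‖Q‖ < 1) (hQ : Q ≠ 0) (h : x * y = Q) (M N : ℕ) :
    qPoch Q y M * qPoch Q x N
      = ∑ j ∈ Finset.range (M+N+1), qBinom Q (M+N) j * sg Q x y ((j:ℤ) - M) := by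
  induction N with
  | zero =>
    induction M with
    | zero => simp [qPoch, sg, binom_zero hq]
    | succ M ih => exact jtp_fin_M hq hQ h M 0 ih
  | succ N ih => exact jtp_fin_zero hq hQ h M N ih

noncomputable def jt (Q x y : ℂ) (r : ℕ) : ℂ :=
  (-1)^r * Q^(r.choose 2) * x^r + (-1)^(r+1) * Q^(tri r) * y^(r+1)

lemma jtp_fin_fold {Q x y : ℂ} (hq : ‖Q‖ < 1) (hQ : Q ≠ 0) (h : x * y = Q) (n : ℕ) :
    qPoch Q y (n+1) * qPoch Q x n = qPoch Q Q (2*n+1) * bb Q 1 (jt Q x y) n := by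
  rw [jtp_fin hq hQ h]
  have e1 : n + 1 + n + 1 = (n+1)+(n+1) := by ring
  rw [e1, Finset.sum_range_add, ← Finset.sum_range_reflect, ← Finset.sum_add_distrib, bb, Finset.mul_sum]
  apply Finset.sum_congr rfl
  intro r hr
  have hr' : r ≤ n := by simpa [Nat.lt_succ_iff] using hr
  obtain ⟨d, rfl⟩ := Nat.exists_eq_add_of_le hr'
  have e2 : r + d + 1 - 1 - r = d := by omega
  have e3 : r + d - r = d := by omega
  have e4 : ((d:ℕ):ℤ) - ((r+d+1:ℕ):ℤ) = Int.negSucc r := by rw [Int.negSucc_eq]; push_cast; ring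
  have e5 : ((r+d+1+r:ℕ):ℤ) - ((r+d+1:ℕ):ℤ) = Int.ofNat r := by push_cast; simp
  rw [e2, e3, e4, e5]
  have e6 : qBinom Q (r+d+1+(r+d)) d = qBinom Q (d + (r+d+r+1)) d := by congr 1; ring
  have e7 : qBinom Q (r+d+1+(r+d)) (r+d+1+r) = qBinom Q ((r+d+r+1) + d) (r+d+r+1) := by congr 1 <;> ring
  have e8 : d + (r+d+r+1) = 2*(r+d)+1 := by ring
  have e9 : (r+d+r+1) + d = 2*(r+d)+1 := by ring
  rw [e6, e7, binom_add, binom_add, e8, e9]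
  simp only [sg, jt]
  ring

end AG

namespace AG

open Filter Topology

lemma summ_aux {q : ℂ} (hq : ‖q‖ < 1) (x : ℂ) : Summable fun i : ℕ => ‖-(x * q^i)‖ := by
  simp only [norm_neg, norm_mul, norm_pow]
  exact (summable_geometric_of_lt_one (norm_nonneg _) hq).mul_left _

lemma tendsto_poch {q : ℂ} (hq : ‖q‖ < 1) (x : ℂ) :
    Tendsto (fun n => qPoch q x n) atTop (𝓝 (qPochInf q x)) := by
  have h := multipliable_one_add_of_summable (summ_aux hq x)
  simp only [← sub_eq_add_neg] at h
  exact h.hasProd.tendsto_prod_nat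

lemma pochInf_ne {q : ℂ} (hq : ‖q‖ < 1) : qPochInf q q ≠ 0 := by
  have h := tprod_one_add_ne_zero_of_summable (f := fun i : ℕ => -(q * q^i)) ?_ (summ_aux hq q)
  · unfold qPochInf
    simpa only [← sub_eq_add_neg] using h
  · intro i
    rw [← sub_eq_add_neg, ← pow_succ']
    exact one_sub_ne hq i

lemma poch_bdd {q : ℂ} (hq : ‖q‖ < 1) : ∃ C : ℝ, 1 ≤ C ∧ (∀ n, ‖qPoch q q n‖ ≤ C) ∧
    ∀ n, ‖(qPoch q q n)⁻¹‖ ≤ C := by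
  have h1 := (tendsto_poch hq q).norm.bddAbove_range
  have h2 := ((tendsto_poch hq q).inv₀ (pochInf_ne hq)).norm.bddAbove_range
  obtain ⟨C1, hC1⟩ := h1
  obtain ⟨C2, hC2⟩ := h2
  refine ⟨max 1 (max C1 C2), le_max_left _ _, fun n => ?_, fun n => ?_⟩
  · exact (hC1 ⟨n, rfl⟩).trans ((le_max_left _ _).trans (le_max_right _ _))
  · exact (hC2 ⟨n, rfl⟩).trans ((le_max_right _ _).trans (le_max_right _ _))

lemma tendsto_sub_nat (k : ℕ) : Tendsto (fun n : ℕ => n - k) atTop atTop :=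
  tendsto_sub_atTop_nat k

lemma tendsto_bb {q : ℂ} (hq : ‖q‖ < 1) (e : ℕ) (α : ℕ → ℂ) (hα : Summable fun r => ‖α r‖) :
    Tendsto (fun n => bb q e α n) atTop (𝓝 ((∑' r, α r) / (qPochInf q q * qPochInf q q))) := by
  obtain ⟨C, hC1, -, hC⟩ := poch_bdd hq
  have hC0 : 0 ≤ C := by linarith
  have h := tendsto_tsum_of_dominated_convergence (𝓕 := atTop)
    (f := fun (n r : ℕ) => if r ≤ n then α r * ((qPoch q q (n-r))⁻¹ * (qPoch q q (n+r+e))⁻¹) else 0)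
    (g := fun r => α r * ((qPochInf q q)⁻¹ * (qPochInf q q)⁻¹))
    (bound := fun r => ‖α r‖ * (C * C)) (hα.mul_right _) ?_ ?_
  · rw [tsum_mul_right, ← mul_inv, ← div_eq_mul_inv] at h
    refine h.congr fun n => ?_
    rw [tsum_eq_sum (s := Finset.range (n+1)), bb]
    · apply Finset.sum_congr rfl
      intro r hr
      rw [if_pos (by simpa [Nat.lt_succ_iff] using hr), ← mul_inv, div_eq_mul_inv]
    · intro r hr
      rw [if_neg (by simpa [Nat.lt_succ_iff] using hr)]
  · intro r
    have t := tendsto_poch hq q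
    have t1 := (t.comp (tendsto_sub_nat r)).inv₀ (pochInf_ne hq)
    have t2 := (t.comp (tendsto_add_atTop_nat (r+e))).inv₀ (pochInf_ne hq)
    refine ((t1.mul t2).const_mul (α r)).congr' ?_
    filter_upwards [eventually_ge_atTop r] with n hn
    rw [if_pos hn]
    simp [add_assoc]
  · refine Eventually.of_forall fun n r => ?_
    split_ifs
    · rw [norm_mul, norm_mul]
      gcongr
      · exact hC _
      · exact hC _
    · simp; positivity

lemma summ_of_pow {q : ℂ} (hq : ‖q‖ < 1) (D : ℝ) (α : ℕ → ℂ) (h : ∀ r, ‖α r‖ ≤ D * ‖q‖^r) :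
    Summable fun r => ‖α r‖ :=
  Summable.of_nonneg_of_le (fun _ => norm_nonneg _) h
    ((summable_geometric_of_lt_one (norm_nonneg _) hq).mul_left D)

/-- Jacobi triple product, folded. -/
lemma jtp {Q x y : ℂ} (hq : ‖Q‖ < 1) (hQ : Q ≠ 0) (h : x * y = Q)
    (hs : Summable fun r => ‖jt Q x y r‖) :
    qPochInf Q y * qPochInf Q x * qPochInf Q Q = ∑' r, jt Q x y r := by
  have hn := pochInf_ne hq
  have t1 : Tendsto (fun n => qPoch Q y (n+1) * qPoch Q x n) atTop
      (𝓝 (qPochInf Q y * qPochInf Q x)) :=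
    ((tendsto_poch hq y).comp (tendsto_add_atTop_nat 1)).mul (tendsto_poch hq x)
  have t0 : Tendsto (fun n : ℕ => 2*n+1) atTop atTop :=
    tendsto_atTop_mono (fun n => by simp only [id]; omega) tendsto_id
  have t2 := ((tendsto_poch hq Q).comp t0).mul (tendsto_bb hq 1 _ hs)
  have t3 := t2.congr (fun n => (jtp_fin_fold hq hQ h n).symm)
  rw [tendsto_nhds_unique t1 t3]
  field_simp

lemma norm_one_sub_pow_le {q : ℂ} (hq : ‖q‖ < 1) (n : ℕ) : ‖1 - q^n‖ ≤ 2 := by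
  refine (norm_sub_le _ _).trans ?_
  have : ‖q‖^n ≤ 1 := pow_le_one₀ (norm_nonneg _) hq.le
  rw [norm_one, norm_pow]; linarith

lemma alp_summ {q : ℂ} (hq : ‖q‖ < 1) (c d : ℕ) : Summable fun r => ‖alp q (c+1) d r‖ := by
  apply summ_of_pow hq 2
  intro r
  unfold alp
  simp only [norm_mul, norm_pow, norm_neg, norm_one, one_pow, one_mul]
  have h1 : ‖q‖^(tri r + (c+1)*r^2) ≤ ‖q‖^r := by
    apply pow_le_pow_of_le_one (norm_nonneg _) hq.le
    nlinarith [Nat.le_self_pow (n := 2) (by norm_num) r, Nat.zero_le (tri r), Nat.zero_le (c * r^2)]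
  have h2 := norm_one_sub_pow_le hq ((c+1)*(2*r+1))
  have h3 : ‖q‖^(d*(r^2+r)) ≤ 1 := pow_le_one₀ (norm_nonneg _) hq.le
  calc _ ≤ ‖q‖^r * 2 * 1 := by gcongr
    _ = _ := by ring

lemma choose_two (r : ℕ) : r.choose 2 + r = tri r := by
  simp [tri, Nat.choose_succ_succ' r 1]; ring

lemma two_tri (r : ℕ) : 2 * tri r = r*(r+1) := by
  induction r with
  | zero => rfl
  | succ r ih => rw [tri_succ]; linarith

lemma alp_eq_jt (q : ℂ) (m a r : ℕ) (ha : a + 2 ≤ m) :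
    alp q (a+1) (m-1-a) r = jt (q^(2*m+1)) (q^(2*m-a)) (q^(a+1)) r := by
  obtain ⟨d, rfl⟩ := Nat.exists_eq_add_of_le ha
  have e1 : a + 2 + d - 1 - a = d + 1 := by omega
  have e2 : 2*(a+2+d) - a = a + 4 + 2*d := by omega
  rw [e1, e2]
  unfold alp jt
  have hc := choose_two r
  have ht := two_tri r
  have f1 : (tri r + (a+1)*r^2) + (d+1)*(r^2+r)
      = (2*(a+2+d)+1) * r.choose 2 + (a+4+2*d)*r := by
    nlinarith
  have f2 : (tri r + (a+1)*r^2) + (a+1)*(2*r+1) + (d+1)*(r^2+r)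
      = (2*(a+2+d)+1) * tri r + (a+1)*(r+1) := by
    nlinarith
  have g1 : (-1 : ℂ)^r * (q^(2*(a+2+d)+1))^(r.choose 2) * (q^(a+4+2*d))^r
      = (-1)^r * q^((tri r + (a+1)*r^2) + (d+1)*(r^2+r)) := by
    rw [f1, ← pow_mul, ← pow_mul, mul_assoc, ← pow_add]
  have g2 : (-1 : ℂ)^(r+1) * (q^(2*(a+2+d)+1))^(tri r) * (q^(a+1))^(r+1)
      = (-1)^(r+1) * q^((tri r + (a+1)*r^2) + (a+1)*(2*r+1) + (d+1)*(r^2+r)) := by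
    rw [f2, ← pow_mul, ← pow_mul, mul_assoc, ← pow_add]
  rw [g1, g2]
  simp only [pow_add _ (_ + _), pow_succ (-1 : ℂ)]
  ring

end AG

namespace AG

open Filter Topology

noncomputable def bin (q : ℂ) (a i n k : ℕ) : ℂ :=
  if i = a then qBinom q (n+1) k else qBinom q n k

noncomputable def wt (q : ℂ) (a i x : ℕ) : ℂ := q^(x^2 + if a < i then x else 0)

noncomputable def U (q : ℂ) (a i : ℕ) (k : Fin i → ℕ) : ℂ :=
  ∏ j ∈ Finset.range i, (wt q a (j+1) (Kfun i k (j+1)) * bin q a j (Kfun i k (j+1)) (Kfun i k j))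

lemma Kfun_zero (i : ℕ) (k : Fin i → ℕ) : Kfun i k 0 = 0 := by simp [Kfun]

lemma Kfun_init (i : ℕ) (k : Fin (i+1) → ℕ) (j : ℕ) (hj : j ≤ i) :
    Kfun (i+1) k j = Kfun i (fun t => k t.castSucc) j := by
  unfold Kfun
  by_cases h : 1 ≤ j
  · rw [dif_pos ⟨h, by omega⟩, dif_pos ⟨h, hj⟩]; rfl
  · rw [dif_neg (by omega), dif_neg (by omega)]

lemma Kfun_last (i : ℕ) (k : Fin (i+1) → ℕ) : Kfun (i+1) k (i+1) = k (Fin.last i) := by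
  unfold Kfun
  rw [dif_pos ⟨by omega, le_rfl⟩]; rfl

lemma U_succ (q : ℂ) (a i : ℕ) (k : Fin (i+1) → ℕ) :
    U q a (i+1) k = U q a i (fun t => k t.castSucc) *
      (wt q a (i+1) (k (Fin.last i)) *
        bin q a i (k (Fin.last i)) (Kfun i (fun t => k t.castSucc) i)) := by
  unfold U
  rw [Finset.prod_range_succ, Kfun_last, Kfun_init i k i le_rfl]
  congr 1
  apply Finset.prod_congr rfl
  intro j hj
  have := Finset.mem_range.mp hj
  rw [Kfun_init i k j (by omega), Kfun_init i k (j+1) (by omega)]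

lemma AGterm_eq {q : ℂ} (hq : ‖q‖ < 1) (m a : ℕ) (ha : a + 2 ≤ m) (k : Fin (m-1) → ℕ) :
    AGterm q m a k = U q a (m-1) k / qPoch q q (Kfun (m-1) k (m-1)) := by
  unfold AGterm U
  have h0 := Kfun_zero (m-1) k
  generalize Kfun (m-1) k = K at *
  obtain ⟨L, rfl⟩ : ∃ L, m = L + 1 := ⟨m-1, by omega⟩
  simp only [Nat.add_sub_cancel]
  rw [Finset.prod_mul_distrib]
  have h1 : ∏ j ∈ Finset.range L, wt q a (j+1) (K (j+1)) =
      q ^ (∑ i ∈ Finset.Ico 1 (L+1), (K i) ^ 2 + ∑ i ∈ Finset.Ico (a + 1) (L+1), K i) := by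
    unfold wt
    rw [Finset.prod_pow_eq_pow_sum, Finset.sum_add_distrib]
    congr 2
    · rw [Finset.sum_Ico_eq_sum_range]
      simp [add_comm]
    · have h3 : ∑ j ∈ Finset.range L, (if a < j + 1 then K (j+1) else 0)
          = ∑ i ∈ Finset.Ico 1 (L+1), (if a < i then K i else 0) := by
        rw [Finset.sum_Ico_eq_sum_range]
        simp [add_comm]
      rw [h3, ← Finset.sum_filter]
      congr 1
      ext i
      simp only [Finset.mem_filter, Finset.mem_Ico]
      omega
  have h2 : ∏ j ∈ Finset.range L, bin q a j (K (j+1)) (K j) =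
      (∏ i ∈ (Finset.Ico 1 L).erase a, qBinom q (K (i + 1)) (K i)) *
        qBinom q (K (a + 1) + 1) (K a) := by
    rw [← Finset.prod_erase_mul _ _ (Finset.mem_range.mpr (show a < L by omega))]
    congr 1
    · symm
      have : ∀ i ∈ (Finset.Ico 1 L).erase a, qBinom q (K (i+1)) (K i) = bin q a i (K (i+1)) (K i) := by
        intro i hi
        simp [bin, (Finset.mem_erase.mp hi).1]
      rw [Finset.prod_congr rfl this]
      apply Finset.prod_subset
      · intro i
        simp only [Finset.mem_erase, Finset.mem_Ico, Finset.mem_range]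
        omega
      · intro i hi hi'
        simp only [Finset.mem_erase, Finset.mem_Ico, Finset.mem_range] at hi hi'
        have : i = 0 := by omega
        subst this
        rw [h0, bin]
        split_ifs <;> exact binom_zero hq _
    · simp [bin]
  rw [h1, h2]
  ring

lemma summ_pi {ρ : ℝ} (h0 : 0 ≤ ρ) (h1 : ρ < 1) (i : ℕ) :
    Summable fun k : Fin i → ℕ => ∏ j, ρ^(k j) := by
  induction i with
  | zero => exact (hasSum_fintype _).summable
  | succ i ih =>
    rw [← (Fin.snocEquiv (fun _ : Fin (i+1) => ℕ)).summable_iff]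
    have := (summable_geometric_of_lt_one h0 h1).mul_of_nonneg ih (fun _ => by positivity)
      (fun _ => by simp only [Pi.zero_apply]; positivity)
    refine this.congr fun p => ?_
    simp [Fin.prod_univ_castSucc, mul_comm]

lemma binom_bdd {q : ℂ} (hq : ‖q‖ < 1) : ∃ D : ℝ, 1 ≤ D ∧ ∀ n k, ‖qBinom q n k‖ ≤ D := by
  obtain ⟨C, hC1, hC, hC'⟩ := poch_bdd hq
  refine ⟨C * (C * C), by nlinarith [mul_le_mul hC1 hC1 zero_le_one (by linarith)], fun n k => ?_⟩
  unfold qBinom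
  split_ifs
  · rw [div_eq_mul_inv, mul_inv, norm_mul, norm_mul]
    gcongr
    · exact hC _
    · exact hC' _
    · exact hC' _
  · simp; positivity

lemma bin_bdd {q : ℂ} (hq : ‖q‖ < 1) : ∃ D : ℝ, 1 ≤ D ∧ ∀ a i n k, ‖bin q a i n k‖ ≤ D := by
  obtain ⟨D, h1, h⟩ := binom_bdd hq
  refine ⟨D, h1, fun a i n k => ?_⟩
  unfold bin
  split_ifs <;> exact h _ _

lemma wt_bdd {q : ℂ} (hq : ‖q‖ < 1) (a i x : ℕ) : ‖wt q a i x‖ ≤ ‖q‖^x := by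
  unfold wt
  rw [norm_pow]
  apply pow_le_pow_of_le_one (norm_nonneg _) hq.le
  nlinarith [Nat.le_self_pow (n := 2) (by norm_num) x, Nat.zero_le (if a < i then x else 0)]

lemma U_bdd {q : ℂ} (hq : ‖q‖ < 1) (a i : ℕ) :
    ∃ D : ℝ, 0 ≤ D ∧ ∀ k, ‖U q a i k‖ ≤ D * ∏ j, ‖q‖^(k j) := by
  obtain ⟨B, hB1, hB⟩ := bin_bdd hq
  induction i with
  | zero => exact ⟨1, by norm_num, fun k => by simp [U]⟩
  | succ i ih =>
    obtain ⟨D, hD0, hD⟩ := ih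
    refine ⟨D * B, by positivity, fun k => ?_⟩
    rw [U_succ, norm_mul, norm_mul, Fin.prod_univ_castSucc]
    calc _ ≤ (D * ∏ j : Fin i, ‖q‖^(k j.castSucc)) * (‖q‖^(k (Fin.last i)) * B) := by
          gcongr
          · exact hD _
          · exact wt_bdd hq _ _ _
          · exact hB _ _ _ _
      _ = _ := by ring

lemma U_summ {q : ℂ} (hq : ‖q‖ < 1) (a i : ℕ) : Summable fun k => ‖U q a i k‖ := by
  obtain ⟨D, hD0, hD⟩ := U_bdd hq a i
  exact Summable.of_nonneg_of_le (fun _ => norm_nonneg _) hD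
    ((summ_pi (norm_nonneg _) hq i).mul_left D)

lemma U_summ_mul {q : ℂ} (hq : ‖q‖ < 1) (a i : ℕ) (g : (Fin i → ℕ) → ℂ) (B : ℝ)
    (hg : ∀ k, ‖g k‖ ≤ B) : Summable fun k => U q a i k * g k := by
  refine Summable.of_norm_bounded ((U_summ hq a i).mul_right B) fun k => ?_
  rw [norm_mul]
  gcongr
  exact hg k

noncomputable def S (q : ℂ) (a i n : ℕ) : ℂ :=
  ∑' k : Fin i → ℕ, U q a i k * (bin q a i n (Kfun i k i) / qPoch q q n)

lemma S_summ {q : ℂ} (hq : ‖q‖ < 1) (a i n : ℕ) :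
    Summable fun k : Fin i → ℕ => U q a i k * (bin q a i n (Kfun i k i) / qPoch q q n) := by
  obtain ⟨B, hB1, hB⟩ := bin_bdd hq
  refine U_summ_mul hq a i _ (B / ‖qPoch q q n‖) fun k => ?_
  rw [norm_div]
  gcongr
  exact hB _ _ _ _

lemma S_zero {q : ℂ} (hq : ‖q‖ < 1) (a n : ℕ) : S q a 0 n = 1 / qPoch q q n := by
  unfold S
  rw [tsum_fintype]
  simp only [U, Kfun_zero, bin, binom_zero hq]
  simp

lemma S_succ {q : ℂ} (hq : ‖q‖ < 1) (a i n : ℕ) :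
    S q a (i+1) n = ∑' x, wt q a (i+1) x * (bin q a (i+1) n x * qPoch q q x / qPoch q q n) *
      S q a i x := by
  have hs := S_summ hq a (i+1) n
  rw [← (Fin.snocEquiv (fun _ : Fin (i+1) => ℕ)).summable_iff] at hs
  rw [S, ← (Fin.snocEquiv (fun _ : Fin (i+1) => ℕ)).tsum_eq]
  refine (Summable.tsum_prod hs).trans ?_
  apply tsum_congr
  intro x
  rw [S, ← tsum_mul_left]
  apply tsum_congr
  intro k
  have hx := P_ne hq x
  simp only [Fin.snocEquiv, Equiv.coe_fn_mk, Function.comp_apply, U_succ, Kfun_last, Fin.snoc_last,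
    Fin.snoc_castSucc]
  field_simp

lemma S_succ_ne {q : ℂ} (hq : ‖q‖ < 1) (a i n : ℕ) (h : i + 1 ≠ a) :
    S q a (i+1) n = ∑ x ∈ Finset.range (n+1), wt q a (i+1) x / qPoch q q (n-x) * S q a i x := by
  rw [S_succ hq, tsum_eq_sum (s := Finset.range (n+1))]
  · apply Finset.sum_congr rfl
    intro x hx
    have hx' : x ≤ n := by simpa [Nat.lt_succ_iff] using hx
    rw [bin, if_neg h, qBinom, if_pos hx']
    have h1 := P_ne hq x
    have h2 := P_ne hq n
    have h3 := P_ne hq (n-x)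
    field_simp
  · intro x hx
    have hx' : n < x := by simpa [Nat.lt_succ_iff] using hx
    rw [bin, if_neg h, binom_lt q hx']
    simp

lemma S_succ_eq {q : ℂ} (hq : ‖q‖ < 1) (a i n : ℕ) (h : i + 1 = a) :
    S q a (i+1) n = (1 - q^(n+1)) *
      ∑ x ∈ Finset.range (n+1+1), wt q a (i+1) x / qPoch q q (n+1-x) * S q a i x := by
  rw [S_succ hq, tsum_eq_sum (s := Finset.range (n+1+1)), Finset.mul_sum]
  · apply Finset.sum_congr rfl
    intro x hx
    have hx' : x ≤ n+1 := by simpa [Nat.lt_succ_iff] using hx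
    rw [bin, if_pos h, qBinom, if_pos hx', P_succ q n]
    have h1 := P_ne hq x
    have h2 := P_ne hq n
    have h3 := P_ne hq (n+1-x)
    field_simp
  · intro x hx
    have hx' : n+1 < x := by simpa [Nat.lt_succ_iff] using hx
    rw [bin, if_pos h, binom_lt q hx']
    simp

lemma S_lt {q : ℂ} (hq : ‖q‖ < 1) (a i : ℕ) (h : i < a) : ∀ n, S q a i n = b q (i+1) n := by
  induction i with
  | zero => intro n; rw [S_zero hq, b_one hq]
  | succ i ih =>
    intro n
    rw [S_succ_ne hq a i n (by omega), b_succ hq]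
    apply Finset.sum_congr rfl
    intro x _
    rw [ih (by omega), wt, if_neg (by omega), add_zero]

lemma S_self {q : ℂ} (hq : ‖q‖ < 1) (a n : ℕ) : S q a a n = b' q (a+1) 0 n := by
  rw [b'_zero hq]
  rcases a with _ | i
  · rw [S_zero hq, b_one hq, P_succ]
    have := P_ne hq n
    have := one_sub_ne hq n
    field_simp
  · rw [S_succ_eq hq (i+1) i n rfl, b_succ hq]
    congr 1
    apply Finset.sum_congr rfl
    intro x _
    rw [S_lt hq (i+1) i (by omega), wt, if_neg (by omega), add_zero]

lemma S_add {q : ℂ} (hq : ‖q‖ < 1) (a d : ℕ) : ∀ n, S q a (a+d) n = b' q (a+1) d n := by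
  induction d with
  | zero => exact S_self hq a
  | succ d ih =>
    intro n
    rw [← add_assoc, S_succ_ne hq a (a+d) n (by omega), b'_succ hq]
    apply Finset.sum_congr rfl
    intro x _
    rw [ih, wt, if_pos (by omega)]

lemma S_tendsto {q : ℂ} (hq : ‖q‖ < 1) (a i : ℕ) (h : i ≠ a) :
    Tendsto (fun n => S q a i n) atTop
      (𝓝 (∑' k : Fin i → ℕ, U q a i k * ((qPoch q q (Kfun i k i))⁻¹ * (qPochInf q q)⁻¹))) := by
  obtain ⟨C, hC1, -, hC⟩ := poch_bdd hq
  have hC0 : 0 ≤ C := by linarith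
  unfold S
  refine tendsto_tsum_of_dominated_convergence (bound := fun k => ‖U q a i k‖ * (C * C))
    ((U_summ hq a i).mul_right _) ?_ ?_
  · intro k
    have t1 := ((tendsto_poch hq q).comp (tendsto_sub_nat (Kfun i k i))).inv₀ (pochInf_ne hq)
    refine ((t1.const_mul (qPoch q q (Kfun i k i))⁻¹).const_mul (U q a i k)).congr' ?_
    filter_upwards [eventually_ge_atTop (Kfun i k i)] with n hn
    rw [bin, if_neg h, qBinom, if_pos hn]
    have h1 := P_ne hq n
    simp only [Function.comp_apply]
    field_simp
  · refine Eventually.of_forall fun n k => ?_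
    rw [norm_mul]
    gcongr
    rw [bin, if_neg h, qBinom]
    split_ifs
    · have h1 := P_ne hq n
      have : qPoch q q n / (qPoch q q (Kfun i k i) * qPoch q q (n - Kfun i k i)) / qPoch q q n
        = (qPoch q q (Kfun i k i))⁻¹ * (qPoch q q (n - Kfun i k i))⁻¹ := by
        field_simp
      rw [this, norm_mul]
      gcongr
      · exact hC _
      · exact hC _
    · simp; positivity

lemma main {q : ℂ} (hq : ‖q‖ < 1) (a d : ℕ) (hd : d ≠ 0) :
    ∑' k : Fin (a+d) → ℕ, U q a (a+d) k / qPoch q q (Kfun (a+d) k (a+d))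
      = (∑' r, alp q (a+1) d r) / qPochInf q q := by
  have t1 := S_tendsto hq a (a+d) (by omega)
  have t2 := tendsto_bb hq 1 _ (alp_summ hq a d)
  have t3 := t1.congr (S_add hq a d)
  have h := tendsto_nhds_unique t3 t2
  have hn := pochInf_ne hq
  simp only [← mul_assoc] at h
  rw [tsum_mul_right] at h
  simp only [← div_eq_mul_inv] at h
  rw [div_eq_iff hn] at h
  rw [h]
  field_simp

end AG

theorem stmt_12 (m a : ℕ) (hm : 2 ≤ m) (ha : a + 2 ≤ m) (q : ℂ)
    (hq0 : 0 < ‖q‖) (hq : ‖q‖ < 1) :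
    Summable (AGterm q m a) ∧
    qPochInf (q ^ (2 * m + 1)) (q ^ (a + 1)) * qPochInf (q ^ (2 * m + 1)) (q ^ (2 * m - a)) *
        qPochInf (q ^ (2 * m + 1)) (q ^ (2 * m + 1)) / qPochInf q q
      = ∑' k : Fin (m - 1) → ℕ, AGterm q m a k := by
  have e : AGterm q m a = fun k => AG.U q a (m-1) k / qPoch q q (Kfun (m-1) k (m-1)) :=
    funext (AG.AGterm_eq hq m a ha)
  have hn := AG.pochInf_ne hq
  have hq' : q ≠ 0 := norm_pos_iff.mp hq0
  constructor
  · obtain ⟨C, -, -, hC⟩ := AG.poch_bdd hq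
    rw [e]
    exact AG.U_summ_mul hq a (m-1) _ C fun k => hC _
  · have hQ : ‖q^(2*m+1)‖ < 1 := by
      rw [norm_pow]; exact pow_lt_one₀ (norm_nonneg _) hq (by omega)
    have hxy : q^(2*m-a) * q^(a+1) = q^(2*m+1) := by
      rw [← pow_add]; congr 1; omega
    have hfun : AG.alp q (a+1) (m-1-a) = AG.jt (q^(2*m+1)) (q^(2*m-a)) (q^(a+1)) :=
      funext fun r => AG.alp_eq_jt q m a r ha
    have hs := AG.alp_summ hq a (m-1-a)
    rw [hfun] at hs
    rw [AG.jtp hQ (pow_ne_zero _ hq') hxy hs, ← hfun, e]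
    have h := AG.main hq a (m-1-a) (by omega)
    rw [← h]
    have e1 : a + (m-1-a) = m - 1 := by omega
    rw [e1]
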